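/- Let k ∈ ℕ, r ∈ ℕ₀, and let ε : (0,1] → (0,∞) be continuous with ε(x) → 0 as x → 0⁺. Then there exists F ∈ C^r[0,1] such that for every algebraic polynomial P, limsup_{x→0⁺} |F(x) − P(x)| / ω_k(F^(r), ε(x)·x^((r+1)/k); [0,1]) = ∞, where ω_k denotes the k-th modulus of smoothness on [0,1]. -/

import Mathlib

open Set Filter

/-- The `k`-th modulus of smoothness of `f` on `[a,b]`:
`ω_k(f,t;[a,b]) = sup_{0<u≤t} sup { |Δ_u^k(f,x)| : x ± ku/2 ∈ [a,b] }`. -/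
noncomputable def wmod (k : ℕ) (f : ℝ → ℝ) (t a b : ℝ) : ℝ :=
  sSup {v : ℝ | ∃ u x : ℝ, 0 < u ∧ u ≤ t ∧ a ≤ x - k * u / 2 ∧ x + k * u / 2 ≤ b ∧
    v = |∑ i ∈ Finset.range (k + 1),
          (-1 : ℝ) ^ i * (k.choose i : ℝ) * f (x + ((k : ℝ) / 2 - i) * u)|}

/-!
Put `F = ∫∫⋯∫ g` (`r` primitives based at `0`), so that `F^(r) = g`, where `g = ∑ ramp (h n)` is a
superposition of the profiles `h (1 - exp (-x / h))`, which have slope `1` at `0` and saturate at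
height `h`. Since `g → 0` but `g x / x → ∞` at `0⁺`, the function `F` lies strictly between `x ^ r`
and `x ^ (r + 1)` in order of magnitude there, a gap that no function analytic at `0` can fill:
`F - G` dominates `x ^ (r + 1)` for every such `G`.

On the other hand `|Δ_u^k (ramp h)| ≤ h min(1, u / h)^k`. If the heights decrease fast enough, then
along a sequence `p n → 0⁺` at which `ε (p n)` is small compared with `h n` and the later heights
are small compared with `p n ^ (r + 1)`, the first `n + 1` ramps contribute `O((t / h n)^k)` and the
others `O(h (n + 1))` to `ω_k(g, t)`, so `ω_k(g, ε (p n) (p n)^((r + 1) / k)) ≤ p n ^ (r + 1)`.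
-/

open Asymptotics
open scoped Topology

section HalvingSequence

variable {h : ℕ → ℝ}

lemma sum_range_add_two_mul_le (hhalf : ∀ n, h (n + 1) ≤ h n / 2) (n : ℕ) :
    ∑ j ∈ Finset.range n, h j + 2 * h n ≤ 2 * h 0 := by
  induction n with
  | zero => simp
  | succ n ih =>
    rw [Finset.sum_range_succ]
    linarith [hhalf n]

lemma sum_range_le_two_mul (hnonneg : ∀ n, 0 ≤ h n) (hhalf : ∀ n, h (n + 1) ≤ h n / 2) (n : ℕ) :
    ∑ j ∈ Finset.range n, h j ≤ 2 * h 0 := by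
  linarith [sum_range_add_two_mul_le hhalf n, hnonneg n]

lemma summable_of_succ_le_half (hnonneg : ∀ n, 0 ≤ h n) (hhalf : ∀ n, h (n + 1) ≤ h n / 2) :
    Summable h :=
  summable_of_sum_range_le hnonneg (sum_range_le_two_mul hnonneg hhalf)

lemma tsum_le_two_mul_of_succ_le_half (hnonneg : ∀ n, 0 ≤ h n) (hhalf : ∀ n, h (n + 1) ≤ h n / 2) :
    ∑' n, h n ≤ 2 * h 0 :=
  Real.tsum_le_of_sum_range_le hnonneg (sum_range_le_two_mul hnonneg hhalf)

lemma antitone_of_succ_le_half (hnonneg : ∀ n, 0 ≤ h n) (hhalf : ∀ n, h (n + 1) ≤ h n / 2) :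
    Antitone h :=
  antitone_nat_of_succ_le fun n => (hhalf n).trans (half_le_self (hnonneg n))

end HalvingSequence

lemma eventually_nhdsGT_forall_mem_Ioc {α : Type*} [LinearOrder α] [TopologicalSpace α]
    [OrderTopology α] [DenselyOrdered α] [NoMaxOrder α] {a : α} {p : α → Prop}
    (hp : ∀ᶠ x in 𝓝[>] a, p x) : ∀ᶠ x in 𝓝[>] a, a < x ∧ ∀ y ∈ Ioc a x, p y := by
  obtain ⟨d, hd, hsub⟩ := mem_nhdsGT_iff_exists_Ioc_subset.1 hp
  filter_upwards [Ioc_mem_nhdsGT hd] with x hx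
  exact ⟨hx.1, fun y hy => hsub ⟨hy.1, hy.2.trans hx.2⟩⟩

section IteratedPrimitive

variable {E : Type*} [NormedAddCommGroup E] [NormedSpace ℝ E]

/-- The `n`-fold iterated integral of `g` based at `0`: the `n`-th primitive of `g` all of whose
derivatives of order less than `n` vanish at `0`. -/
noncomputable def iteratedPrimitive (g : ℝ → E) : ℕ → ℝ → E
  | 0 => g
  | n + 1 => fun x => ∫ y in (0 : ℝ)..x, iteratedPrimitive g n y

lemma continuous_iteratedPrimitive {g : ℝ → E} (hg : Continuous g) (n : ℕ) :
    Continuous (iteratedPrimitive g n) := by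
  induction n with
  | zero => exact hg
  | succ n ih =>
    exact intervalIntegral.continuous_primitive (fun a b => ih.intervalIntegrable a b) 0

section Derivatives

variable [CompleteSpace E] {g : ℝ → E}

lemma hasDerivAt_iteratedPrimitive_succ (hg : Continuous g) (n : ℕ) (x : ℝ) :
    HasDerivAt (iteratedPrimitive g (n + 1)) (iteratedPrimitive g n x) x :=
  ((continuous_iteratedPrimitive hg n).integral_hasStrictDerivAt 0 x).hasDerivAt

lemma deriv_iteratedPrimitive_succ (hg : Continuous g) (n : ℕ) :
    deriv (iteratedPrimitive g (n + 1)) = iteratedPrimitive g n :=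
  funext fun x => (hasDerivAt_iteratedPrimitive_succ hg n x).deriv

lemma contDiff_iteratedPrimitive (hg : Continuous g) (n : ℕ) :
    ContDiff ℝ n (iteratedPrimitive g n) := by
  induction n with
  | zero => exact contDiff_zero.2 hg
  | succ n ih =>
    push_cast
    refine contDiff_succ_iff_deriv.2
      ⟨fun x => (hasDerivAt_iteratedPrimitive_succ hg n x).differentiableAt, by simp, ?_⟩
    rwa [deriv_iteratedPrimitive_succ hg]

lemma iteratedDeriv_iteratedPrimitive (hg : Continuous g) (n : ℕ) :
    iteratedDeriv n (iteratedPrimitive g n) = g := by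
  induction n with
  | zero => exact iteratedDeriv_zero
  | succ n ih => rw [iteratedDeriv_succ', deriv_iteratedPrimitive_succ hg, ih]

lemma eqOn_iteratedDerivWithin_iteratedPrimitive (hg : Continuous g) (n : ℕ) {s : Set ℝ}
    (hs : UniqueDiffOn ℝ s) : EqOn (iteratedDerivWithin n (iteratedPrimitive g n) s) g s :=
  fun x hx => by
    rw [iteratedDerivWithin_eq_iteratedDeriv hs (contDiff_iteratedPrimitive hg n).contDiffAt hx,
      iteratedDeriv_iteratedPrimitive hg]

end Derivatives

lemma isLittleO_integral_pow_succ {g : ℝ → E} {m : ℕ} (hg : g =o[𝓝[>] 0] fun x => x ^ m) :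
    (fun x => ∫ y in (0 : ℝ)..x, g y) =o[𝓝[>] 0] fun x => x ^ (m + 1) := by
  refine isLittleO_iff.2 fun c hc => ?_
  filter_upwards [eventually_nhdsGT_forall_mem_Ioc (isLittleO_iff.1 hg hc)] with x ⟨hx, hgx⟩
  have hbound : ∀ y ∈ uIoc 0 x, ‖g y‖ ≤ c * x ^ m := fun y hy => by
    rw [uIoc_of_le hx.le] at hy
    calc ‖g y‖ ≤ c * ‖y ^ m‖ := hgx y hy
      _ = c * y ^ m := by rw [Real.norm_of_nonneg (pow_nonneg hy.1.le m)]
      _ ≤ c * x ^ m := by gcongr; exacts [hy.1.le, hy.2]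
  calc ‖∫ y in (0 : ℝ)..x, g y‖ ≤ c * x ^ m * |x - 0| :=
        intervalIntegral.norm_integral_le_of_norm_le_const hbound
    _ = c * ‖x ^ (m + 1)‖ := by
      rw [sub_zero, abs_of_pos hx, Real.norm_of_nonneg (pow_pos hx _).le, pow_succ, mul_assoc]

lemma isLittleO_iteratedPrimitive_pow {g : ℝ → E} {m : ℕ} (hg : g =o[𝓝[>] 0] fun x => x ^ m)
    (n : ℕ) : iteratedPrimitive g n =o[𝓝[>] 0] fun x => x ^ (m + n) := by
  induction n with
  | zero => exact hg
  | succ n ih => exact isLittleO_integral_pow_succ ih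

lemma isLittleO_pow_succ_integral {g : ℝ → ℝ} {m : ℕ} (hcont : Continuous g)
    (hnonneg : ∀ x, 0 ≤ x → 0 ≤ g x) (hg : (fun x => x ^ m) =o[𝓝[>] 0] g) :
    (fun x => x ^ (m + 1)) =o[𝓝[>] 0] fun x => ∫ y in (0 : ℝ)..x, g y := by
  refine isLittleO_iff.2 fun c hc => ?_
  have hc' : 0 < c / (m + 1) := by positivity
  filter_upwards [eventually_nhdsGT_forall_mem_Ioc (isLittleO_iff.1 hg hc')]
    with x ⟨hx, hgx⟩
  have hbound : ∀ y ∈ Ioo 0 x, y ^ m ≤ c / (m + 1) * g y := fun y hy => by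
    simpa only [Real.norm_of_nonneg (pow_nonneg hy.1.le m), Real.norm_of_nonneg (hnonneg y hy.1.le)]
      using hgx y ⟨hy.1, hy.2.le⟩
  have hint : ∫ y in (0 : ℝ)..x, y ^ m ≤ ∫ y in (0 : ℝ)..x, c / (m + 1) * g y :=
    intervalIntegral.integral_mono_on_of_le_Ioo hx.le
      ((continuous_pow m).intervalIntegrable _ _)
      ((hcont.const_mul _).intervalIntegrable _ _) hbound
  rw [integral_pow, intervalIntegral.integral_const_mul, zero_pow m.succ_ne_zero, sub_zero,
    div_mul_eq_mul_div, div_le_div_iff_of_pos_right (by positivity)] at hint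
  rwa [Real.norm_of_nonneg (pow_pos hx _).le, Real.norm_of_nonneg
    (intervalIntegral.integral_nonneg hx.le fun y hy => hnonneg y hy.1)]

lemma iteratedPrimitive_nonneg {g : ℝ → ℝ} (hnonneg : ∀ x, 0 ≤ x → 0 ≤ g x) (n : ℕ) :
    ∀ x, 0 ≤ x → 0 ≤ iteratedPrimitive g n x := by
  induction n with
  | zero => exact hnonneg
  | succ n ih => exact fun x hx => intervalIntegral.integral_nonneg hx fun y hy => ih y hy.1

lemma isLittleO_pow_iteratedPrimitive {g : ℝ → ℝ} {m : ℕ} (hcont : Continuous g)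
    (hnonneg : ∀ x, 0 ≤ x → 0 ≤ g x) (hg : (fun x => x ^ m) =o[𝓝[>] 0] g) (n : ℕ) :
    (fun x => x ^ (m + n)) =o[𝓝[>] 0] iteratedPrimitive g n := by
  induction n with
  | zero => exact hg
  | succ n ih =>
    exact isLittleO_pow_succ_integral (continuous_iteratedPrimitive hcont n)
      (iteratedPrimitive_nonneg hnonneg n) ih

end IteratedPrimitive

section AnalyticGap

variable {𝕜 E : Type*} [NontriviallyNormedField 𝕜] [NormedAddCommGroup E] [NormedSpace 𝕜 E]

lemma isBigO_pow_pow_of_le {m n : ℕ} (hmn : m ≤ n) :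
    (fun x : 𝕜 => x ^ n) =O[𝓝 0] fun x => x ^ m := by
  rcases hmn.eq_or_lt with rfl | hlt
  · exact isBigO_refl _ _
  · exact (isLittleO_pow_pow hlt).isBigO

lemma exists_isTheta_pow_of_analyticAt {G : 𝕜 → E} (hG : AnalyticAt 𝕜 G 0)
    (hne : ¬∀ᶠ x in 𝓝 0, G x = 0) : ∃ m : ℕ, G =Θ[𝓝 0] fun x => x ^ m := by
  obtain ⟨m, q, hq, hq0, hGq⟩ := hG.exists_eventuallyEq_pow_smul_nonzero_iff.2 hne
  have hqΘ : q =Θ[𝓝 0] fun _ => (1 : 𝕜) :=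
    ((isEquivalent_const_iff_tendsto hq0).2 hq.continuousAt).isTheta.trans
      (isTheta_const_const hq0 one_ne_zero)
  have hGΘ : G =Θ[𝓝 0] fun x => x ^ m • q x := by
    simp only [sub_zero] at hGq
    exact EventuallyEq.isTheta hGq
  refine ⟨m, hGΘ.trans ?_⟩
  simpa only [smul_eq_mul, mul_one] using (isTheta_refl (fun x : 𝕜 => x ^ m) (𝓝 0)).smul hqΘ

lemma isLittleO_pow_sub_of_analyticAt {F G : 𝕜 → E} {l : Filter 𝕜} (hl : l ≤ 𝓝 0) {r : ℕ}
    (hlow : (fun x => x ^ (r + 1)) =o[l] F) (hupp : F =o[l] fun x => x ^ r)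
    (hG : AnalyticAt 𝕜 G 0) : (fun x => x ^ (r + 1)) =o[l] fun x => F x - G x := by
  by_cases hzero : ∀ᶠ x in 𝓝 0, G x = 0
  · refine hlow.congr' EventuallyEq.rfl ?_
    filter_upwards [hl hzero] with x hx
    rw [hx, sub_zero]
  obtain ⟨m, hm⟩ := exists_isTheta_pow_of_analyticAt hG hzero
  replace hm := hm.mono hl
  simp only [sub_eq_add_neg]
  rcases le_or_gt m r with hmr | hrm
  · have hFG : F =o[l] G :=
      (hupp.trans_isBigO ((isBigO_pow_pow_of_le hmr).mono hl)).trans_isTheta hm.symm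
    have hpow : (fun x : 𝕜 => x ^ (r + 1)) =o[l] G :=
      ((isLittleO_pow_pow (Nat.lt_succ_of_le hmr)).mono hl).trans_isTheta hm.symm
    exact hpow.neg_right.trans_isTheta hFG.neg_right.right_isTheta_add
  · have hGF : G =o[l] F :=
      (hm.1.trans ((isBigO_pow_pow_of_le hrm).mono hl)).trans_isLittleO hlow
    exact hlow.trans_isTheta hGF.neg_left.right_isTheta_add'

end AnalyticGap

section Modulus

variable {k : ℕ} {f g : ℝ → ℝ} {t a b : ℝ}

lemma sum_symmetric_difference_eq_fwdDiff_iter (k : ℕ) (f : ℝ → ℝ) (u x : ℝ) :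
    ∑ i ∈ Finset.range (k + 1), (-1 : ℝ) ^ i * (k.choose i : ℝ) * f (x + ((k : ℝ) / 2 - i) * u)
      = (fwdDiff u)^[k] f (x - k * u / 2) := by
  rw [fwdDiff_iter_eq_sum_shift, ← Finset.sum_flip]
  refine Finset.sum_congr rfl fun i hi => ?_
  have hik : i ≤ k := Finset.mem_range_succ_iff.1 hi
  have hnode : x + ((k : ℝ) / 2 - (k - i : ℕ)) * u = x - k * u / 2 + i • u := by
    rw [nsmul_eq_mul, Nat.cast_sub hik]
    ring
  rw [hnode, Nat.choose_symm hik, zsmul_eq_mul]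
  push_cast
  rfl

lemma wmod_nonneg (k : ℕ) (f : ℝ → ℝ) (t a b : ℝ) : 0 ≤ wmod k f t a b := by
  refine Real.sSup_nonneg ?_
  rintro v ⟨u, x, -, -, -, -, rfl⟩
  exact abs_nonneg _

lemma wmod_le {B : ℝ} (hB : 0 ≤ B)
    (h : ∀ u y, 0 < u → u ≤ t → a ≤ y → y + k * u ≤ b → |(fwdDiff u)^[k] f y| ≤ B) :
    wmod k f t a b ≤ B := by
  refine Real.sSup_le ?_ hB
  rintro v ⟨u, x, hu, hut, ha, hb, rfl⟩
  rw [sum_symmetric_difference_eq_fwdDiff_iter]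
  exact h u _ hu hut ha (by linarith)

lemma symmetric_difference_node_mem_Icc {i : ℕ} (hi : i ≤ k) {u x : ℝ} (hu : 0 ≤ u)
    (ha : a ≤ x - k * u / 2) (hb : x + k * u / 2 ≤ b) :
    x + ((k : ℝ) / 2 - i) * u ∈ Icc a b := by
  have hlow : 0 ≤ (i : ℝ) * u := by positivity
  have hupp : (i : ℝ) * u ≤ k * u := by gcongr
  constructor <;> linarith

lemma wmod_congr (hfg : EqOn f g (Icc a b)) : wmod k f t a b = wmod k g t a b := by
  unfold wmod
  congr! 7 with v u x
  refine and_congr_right fun hu => and_congr_right fun _ => and_congr_right fun ha =>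
    and_congr_right fun hb => ?_
  rw [Finset.sum_congr rfl fun i hi => by
    rw [hfg (symmetric_difference_node_mem_Icc (Finset.mem_range_succ_iff.1 hi) hu.le ha hb)]]

end Modulus

/-- The exponential ramp of height `h`: it has slope `1` at `0⁺` and saturates at `h`. The absolute
value keeps it bounded on the whole line. -/
noncomputable def ramp (h x : ℝ) : ℝ := h * (1 - Real.exp (-|x| / h))

section Ramp

variable {h : ℝ}

lemma continuous_ramp (h : ℝ) : Continuous (ramp h) := by
  unfold ramp
  fun_prop

lemma ramp_zero_right (h : ℝ) : ramp h 0 = 0 := by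
  simp [ramp]

lemma ramp_nonneg (hh : 0 < h) (x : ℝ) : 0 ≤ ramp h x := by
  refine mul_nonneg hh.le (sub_nonneg.2 (Real.exp_le_one_iff.2 ?_))
  rw [neg_div]
  exact neg_nonpos.2 (by positivity)

lemma ramp_le (hh : 0 < h) (x : ℝ) : ramp h x ≤ h :=
  mul_le_of_le_one_right hh.le (sub_le_self _ (Real.exp_pos _).le)

lemma half_le_ramp (hh : 0 < h) {x : ℝ} (hx : x ∈ Icc 0 h) : x / 2 ≤ ramp h x := by
  have hy : x / h ∈ Icc 0 1 := ⟨div_nonneg hx.1 hh.le, (div_le_one hh).2 hx.2⟩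
  have hexp : Real.exp (-(x / h)) ≤ 1 - x / h / 2 := by
    rw [Real.exp_neg]
    refine inv_le_of_inv_le₀ (by linarith [hy.2]) (le_trans ?_ (Real.add_one_le_exp (x / h)))
    rw [inv_le_iff_one_le_mul₀ (by linarith [hy.2])]
    nlinarith [hy.1, hy.2]
  calc x / 2 = h * (x / h / 2) := by field_simp
    _ ≤ h * (1 - Real.exp (-(x / h))) := by gcongr; linarith
    _ = ramp h x := by rw [ramp, abs_of_nonneg hx.1, neg_div]

lemma fwdDiff_iter_succ_ramp (k : ℕ) {u : ℝ} (hu : 0 ≤ u) :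
    ∀ y, 0 ≤ y → (fwdDiff u)^[k + 1] (ramp h) y
      = -(h * (Real.exp (-y / h) * (Real.exp (-u / h) - 1) ^ (k + 1))) := by
  have hexp : ∀ y, Real.exp (-(y + u) / h) = Real.exp (-y / h) * Real.exp (-u / h) := fun y => by
    rw [← Real.exp_add, neg_add, add_div]
  induction k with
  | zero =>
    intro y hy
    simp only [zero_add, Function.iterate_one, fwdDiff, ramp, abs_of_nonneg hy,
      abs_of_nonneg (add_nonneg hy hu), hexp]
    ring
  | succ k ih =>
    intro y hy
    rw [Function.iterate_succ_apply', fwdDiff, ih y hy, ih (y + u) (add_nonneg hy hu), hexp]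
    ring

lemma abs_fwdDiff_iter_ramp_le (hh : 0 < h) (k : ℕ) {u y : ℝ} (hu : 0 ≤ u) (hy : 0 ≤ y) :
    |(fwdDiff u)^[k] (ramp h) y| ≤ h * min 1 (u / h) ^ k := by
  cases k with
  | zero => simpa [abs_of_nonneg (ramp_nonneg hh y)] using ramp_le hh y
  | succ k =>
    have hneg : ∀ z, 0 ≤ z → Real.exp (-z / h) ≤ 1 := fun z hz =>
      Real.exp_le_one_iff.2 (div_nonpos_of_nonpos_of_nonneg (neg_nonpos.2 hz) hh.le)
    have hstep : |Real.exp (-u / h) - 1| ≤ min 1 (u / h) := by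
      have hpos := Real.exp_pos (-u / h)
      have hlin := Real.add_one_le_exp (-u / h)
      rw [abs_of_nonpos (by linarith [hneg u hu])]
      rw [neg_div] at *
      exact le_min (by linarith) (by linarith)
    rw [fwdDiff_iter_succ_ramp k hu y hy, abs_neg, abs_mul, abs_mul, abs_pow, abs_of_pos hh,
      Real.abs_exp]
    calc h * (Real.exp (-y / h) * |Real.exp (-u / h) - 1| ^ (k + 1))
        ≤ h * (1 * min 1 (u / h) ^ (k + 1)) := by gcongr; exact hneg y hy
      _ = h * min 1 (u / h) ^ (k + 1) := by rw [one_mul]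

end Ramp

lemma hasSum_fwdDiff_iter {ι M G : Type*} [AddCommMonoid M] [AddCommGroup G] [TopologicalSpace G]
    [IsTopologicalAddGroup G] {f : ι → M → G} {g : M → G}
    (hf : ∀ x, HasSum (fun j => f j x) (g x)) (u : M) (k : ℕ) :
    ∀ x, HasSum (fun j => (fwdDiff u)^[k] (f j) x) ((fwdDiff u)^[k] g x) := by
  induction k with
  | zero => exact hf
  | succ k ih =>
    intro x
    simp only [Function.iterate_succ_apply', fwdDiff]
    exact (ih (x + u)).sub (ih x)

/-- The superposition `∑ ramp (h n)` of ramps: a continuous function when the heights are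
summable, whose difference quotient at `0⁺` is nevertheless infinite. -/
noncomputable def rampSum (h : ℕ → ℝ) (x : ℝ) : ℝ := ∑' n, ramp (h n) x

section RampSum

variable {h : ℕ → ℝ}

lemma summable_ramp (hpos : ∀ n, 0 < h n) (hsum : Summable h) (x : ℝ) :
    Summable fun n => ramp (h n) x :=
  hsum.of_nonneg_of_le (fun n => ramp_nonneg (hpos n) x) fun n => ramp_le (hpos n) x

lemma continuous_rampSum (hpos : ∀ n, 0 < h n) (hsum : Summable h) : Continuous (rampSum h) :=
  continuous_tsum (fun n => continuous_ramp (h n)) hsum fun n x => by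
    rw [Real.norm_of_nonneg (ramp_nonneg (hpos n) x)]
    exact ramp_le (hpos n) x

lemma rampSum_nonneg (hpos : ∀ n, 0 < h n) (x : ℝ) : 0 ≤ rampSum h x :=
  tsum_nonneg fun n => ramp_nonneg (hpos n) x

lemma isLittleO_rampSum_one (hpos : ∀ n, 0 < h n) (hsum : Summable h) :
    rampSum h =o[𝓝 0] fun _ => (1 : ℝ) := by
  have hzero : rampSum h 0 = 0 := by simp only [rampSum, ramp_zero_right, tsum_zero]
  exact (isLittleO_one_iff ℝ).2 ((continuous_rampSum hpos hsum).tendsto' 0 0 hzero)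

lemma isLittleO_id_rampSum (hpos : ∀ n, 0 < h n) (hsum : Summable h) :
    (fun x => x) =o[𝓝[>] 0] rampSum h := by
  refine isLittleO_iff.2 fun c hc => ?_
  obtain ⟨n, hn⟩ := exists_nat_ge (2 / c)
  have hsmall : ∀ᶠ x in 𝓝[>] (0 : ℝ), ∀ j ∈ Finset.range n, x ∈ Ioc 0 (h j) :=
    (eventually_all_finset _).2 fun j _ => Ioc_mem_nhdsGT (hpos j)
  filter_upwards [hsmall, self_mem_nhdsWithin] with x hx hx0
  rw [mem_Ioi] at hx0
  have hlow : n * (x / 2) ≤ rampSum h x :=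
    calc (n : ℝ) * (x / 2) = ∑ _j ∈ Finset.range n, x / 2 := by
          rw [Finset.sum_const, Finset.card_range, nsmul_eq_mul]
      _ ≤ ∑ j ∈ Finset.range n, ramp (h j) x := Finset.sum_le_sum fun j hj =>
          half_le_ramp (hpos j) (Ioc_subset_Icc_self (hx j hj))
      _ ≤ rampSum h x := (summable_ramp hpos hsum x).sum_le_tsum _
          fun j _ => ramp_nonneg (hpos j) x
  rw [Real.norm_of_nonneg hx0.le, Real.norm_of_nonneg (rampSum_nonneg hpos x)]
  calc x = c * (2 / c * (x / 2)) := by field_simp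
    _ ≤ c * (n * (x / 2)) := by gcongr
    _ ≤ c * rampSum h x := by gcongr

lemma abs_fwdDiff_iter_rampSum_le (k : ℕ) (hpos : ∀ n, 0 < h n) (hsum : Summable h)
    (hanti : Antitone h) (n : ℕ) {u y : ℝ} (hu : 0 ≤ u) (hy : 0 ≤ y) :
    |(fwdDiff u)^[k] (rampSum h) y| ≤ (∑' j, h j) * (u / h n) ^ k + ∑' j, h (j + (n + 1)) := by
  set D : ℕ → ℝ := fun j => (fwdDiff u)^[k] (ramp (h j)) y
  have hDsum : HasSum D ((fwdDiff u)^[k] (rampSum h) y) :=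
    hasSum_fwdDiff_iter (fun x => (summable_ramp hpos hsum x).hasSum) u k y
  have hmin : ∀ j, 0 ≤ min 1 (u / h j) := fun j => le_min zero_le_one (div_nonneg hu (hpos j).le)
  have hbound : ∀ j, |D j| ≤ h j * min 1 (u / h j) ^ k := fun j =>
    abs_fwdDiff_iter_ramp_le (hpos j) k hu hy
  have hlate : ∀ j, |D j| ≤ h j := fun j =>
    (hbound j).trans (mul_le_of_le_one_right (hpos j).le (pow_le_one₀ (hmin j) (min_le_left _ _)))
  have hearly : ∀ j ∈ Finset.range (n + 1), |D j| ≤ h j * (u / h n) ^ k := fun j hj => by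
    have hle : min 1 (u / h j) ≤ u / h n := (min_le_right _ _).trans
      (div_le_div_of_nonneg_left hu (hpos n) (hanti (Finset.mem_range_succ_iff.1 hj)))
    exact (hbound j).trans
      (mul_le_mul_of_nonneg_left (pow_le_pow_left₀ (hmin j) hle k) (hpos j).le)
  have habs : Summable fun j => |D j| := hsum.of_nonneg_of_le (fun _ => abs_nonneg _) hlate
  calc |(fwdDiff u)^[k] (rampSum h) y| = |∑' j, D j| := by rw [hDsum.tsum_eq]
    _ ≤ ∑' j, |D j| := by simpa only [Real.norm_eq_abs] using norm_tsum_le_tsum_norm (f := D) habs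
    _ = ∑ j ∈ Finset.range (n + 1), |D j| + ∑' j, |D (j + (n + 1))| :=
      (habs.sum_add_tsum_nat_add (n + 1)).symm
    _ ≤ ∑ j ∈ Finset.range (n + 1), h j * (u / h n) ^ k + ∑' j, h (j + (n + 1)) :=
      add_le_add (Finset.sum_le_sum hearly)
        (((summable_nat_add_iff (n + 1)).2 habs).tsum_le_tsum (fun j => hlate _)
          ((summable_nat_add_iff (n + 1)).2 hsum))
    _ ≤ (∑' j, h j) * (u / h n) ^ k + ∑' j, h (j + (n + 1)) := by
      have := hpos n
      rw [← Finset.sum_mul]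
      gcongr
      exact hsum.sum_le_tsum _ fun j _ => (hpos j).le

lemma wmod_rampSum_le (k : ℕ) (hpos : ∀ n, 0 < h n) (hhalf : ∀ n, h (n + 1) ≤ h n / 2) (n : ℕ)
    {t : ℝ} (ht : 0 ≤ t) (b : ℝ) :
    wmod k (rampSum h) t 0 b ≤ 2 * h 0 * (t / h n) ^ k + 2 * h (n + 1) := by
  have hnonneg : ∀ n, 0 ≤ h n := fun n => (hpos n).le
  have hn := hpos n
  have htotal : ∑' j, h j ≤ 2 * h 0 := tsum_le_two_mul_of_succ_le_half hnonneg hhalf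
  have htail : ∑' j, h (j + (n + 1)) ≤ 2 * h (n + 1) := by
    simpa only [zero_add] using tsum_le_two_mul_of_succ_le_half (h := fun j => h (j + (n + 1)))
      (fun j => hnonneg _) fun j => by simpa only [Nat.add_right_comm] using hhalf (j + (n + 1))
  have hB : 0 ≤ 2 * h 0 * (t / h n) ^ k + 2 * h (n + 1) := by
    have := hnonneg 0
    have := hnonneg (n + 1)
    positivity
  refine wmod_le hB fun u y hu hut hy _ => ?_
  refine (abs_fwdDiff_iter_rampSum_le k hpos (summable_of_succ_le_half hnonneg hhalf)
    (antitone_of_succ_le_half hnonneg hhalf) n hu.le hy).trans ?_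
  have := hnonneg 0
  gcongr

lemma wmod_rampSum_le_pow {k : ℕ} (hk : k ≠ 0) (hone : h 0 ≤ 1) (hpos : ∀ n, 0 < h n)
    (hhalf : ∀ n, h (n + 1) ≤ h n / 2) {m n : ℕ} {e x : ℝ} (hx : 0 ≤ x) (he : 0 ≤ e)
    (hen : e ≤ h n / 4) (hxn : h (n + 1) ≤ x ^ m / 4) (b : ℝ) :
    wmod k (rampSum h) (e * x ^ ((m : ℝ) / k)) 0 b ≤ x ^ m := by
  have hroot : (x ^ ((m : ℝ) / k)) ^ k = x ^ m := by
    rw [← Real.rpow_mul_natCast hx, div_mul_cancel₀ _ (Nat.cast_ne_zero.2 hk), Real.rpow_natCast]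
  have he4 : (e / h n) ^ k ≤ 1 / 4 := by
    have hle : e / h n ≤ 1 / 4 := by
      rw [div_le_iff₀ (hpos n)]
      linarith
    exact (pow_le_of_le_one (div_nonneg he (hpos n).le) (by linarith) hk).trans hle
  calc wmod k (rampSum h) (e * x ^ ((m : ℝ) / k)) 0 b
      ≤ 2 * h 0 * (e * x ^ ((m : ℝ) / k) / h n) ^ k + 2 * h (n + 1) :=
        wmod_rampSum_le k hpos hhalf n (by positivity) b
    _ = 2 * h 0 * ((e / h n) ^ k * x ^ m) + 2 * h (n + 1) := by
      rw [mul_div_right_comm, mul_pow, hroot]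
    _ ≤ 2 * 1 * (1 / 4 * x ^ m) + 2 * (x ^ m / 4) := by
      have := hpos n
      gcongr
    _ = x ^ m := by ring

end RampSum

lemma exists_halving_seq_and_points {ε : ℝ → ℝ} (hε : Tendsto ε (𝓝[>] 0) (𝓝[>] 0)) (m : ℕ) :
    ∃ h p : ℕ → ℝ, h 0 = 1 ∧ (∀ n, 0 < h n) ∧ (∀ n, h (n + 1) ≤ h n / 2) ∧
      Tendsto p atTop (𝓝[>] 0) ∧
      ∀ n, 0 < p n ∧ 0 < ε (p n) ∧ ε (p n) ≤ h n / 4 ∧ h (n + 1) ≤ p n ^ m / 4 := by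
  have hpoint : ∀ a : ℝ, 0 < a → ∃ x, (0 < x ∧ x ≤ a) ∧ 0 < ε x ∧ ε x ≤ a / 4 := fun a ha =>
    ((eventually_mem_set.2 (Ioc_mem_nhdsGT ha)).and
      (hε.eventually (Ioc_mem_nhdsGT (div_pos ha four_pos)))).exists
  choose! X hX hεX using hpoint
  let next : ℝ → ℝ := fun a => min (a / 2) (X a ^ m / 4)
  let h : ℕ → ℝ := fun n => next^[n] 1
  have hsucc : ∀ n, h (n + 1) = next (h n) := fun n => Function.iterate_succ_apply' next n 1
  have hnext : MapsTo next (Ioi 0) (Ioi 0) := fun a ha =>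
    lt_min (half_pos ha) (div_pos (pow_pos (hX a ha).1 m) four_pos)
  have hpos : ∀ n, 0 < h n := fun n => hnext.iterate n (mem_Ioi.2 one_pos)
  have hhalf : ∀ n, h (n + 1) ≤ h n / 2 := fun n => (hsucc n).trans_le (min_le_left _ _)
  have hlim : Tendsto h atTop (𝓝 0) :=
    (summable_of_succ_le_half (fun n => (hpos n).le) hhalf).tendsto_atTop_zero
  refine ⟨h, fun n => X (h n), rfl, hpos, hhalf, tendsto_nhdsWithin_iff.2 ⟨?_, ?_⟩, fun n => ?_⟩
  · exact squeeze_zero (fun n => (hX _ (hpos n)).1.le) (fun n => (hX _ (hpos n)).2) hlim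
  · exact Eventually.of_forall fun n => (hX _ (hpos n)).1
  · exact ⟨(hX _ (hpos n)).1, (hεX _ (hpos n)).1, (hεX _ (hpos n)).2,
      (hsucc n).trans_le (min_le_right _ _)⟩

theorem stmt5_general {k : ℕ} (hk : k ≠ 0) (r : ℕ) {ε : ℝ → ℝ}
    (hε : Tendsto ε (𝓝[>] 0) (𝓝[>] 0)) :
    ∃ F : ℝ → ℝ, ContDiff ℝ r F ∧ ∃ p : ℕ → ℝ, Tendsto p atTop (𝓝[>] 0) ∧
      ∀ G : ℝ → ℝ, AnalyticAt ℝ G 0 → ∀ M : ℝ, ∀ᶠ n in atTop,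
        M * wmod k (iteratedDerivWithin r F (Icc 0 1))
          (ε (p n) * p n ^ (((r : ℝ) + 1) / k)) 0 1 < |F (p n) - G (p n)| := by
  obtain ⟨h, p, hone, hpos, hhalf, hp, hpn⟩ := exists_halving_seq_and_points hε (r + 1)
  have hsum : Summable h := summable_of_succ_le_half (fun n => (hpos n).le) hhalf
  have hcont : Continuous (rampSum h) := continuous_rampSum hpos hsum
  set F := iteratedPrimitive (rampSum h) r
  have hω : ∀ n, wmod k (iteratedDerivWithin r F (Icc 0 1))
      (ε (p n) * p n ^ (((r : ℝ) + 1) / k)) 0 1 ≤ p n ^ (r + 1) := fun n => by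
    obtain ⟨hp0, hε0, hεp, hph⟩ := hpn n
    rw [wmod_congr (eqOn_iteratedDerivWithin_iteratedPrimitive hcont r uniqueDiffOn_Icc_zero_one)]
    exact_mod_cast wmod_rampSum_le_pow hk hone.le hpos hhalf hp0.le hε0.le hεp hph 1
  have hlow : (fun x => x ^ (r + 1)) =o[𝓝[>] 0] F := by
    simpa only [pow_one, add_comm] using isLittleO_pow_iteratedPrimitive hcont
      (fun x _ => rampSum_nonneg hpos x) (m := 1) (by simpa using isLittleO_id_rampSum hpos hsum) r
  have hupp : F =o[𝓝[>] 0] fun x => x ^ r := by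
    simpa only [zero_add] using isLittleO_iteratedPrimitive_pow (m := 0)
      (by simpa using (isLittleO_rampSum_one hpos hsum).mono nhdsWithin_le_nhds) r
  refine ⟨F, contDiff_iteratedPrimitive hcont r, p, hp, fun G hG M => ?_⟩
  have hgap := isLittleO_pow_sub_of_analyticAt nhdsWithin_le_nhds hlow hupp hG
  have hM : 0 < |M| + 1 := by positivity
  filter_upwards [hp.eventually (isLittleO_iff.1 hgap (inv_pos.2 hM))] with n hn
  have hpow : 0 < p n ^ (r + 1) := pow_pos (hpn n).1 _
  rw [Real.norm_of_nonneg hpow.le, Real.norm_eq_abs, le_inv_mul_iff₀ hM] at hn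
  calc M * wmod k (iteratedDerivWithin r F (Icc 0 1)) (ε (p n) * p n ^ (((r : ℝ) + 1) / k)) 0 1
      ≤ |M| * p n ^ (r + 1) :=
        mul_le_mul (le_abs_self M) (hω n) (wmod_nonneg _ _ _ _ _) (abs_nonneg M)
    _ < (|M| + 1) * p n ^ (r + 1) := by gcongr; exact lt_add_one _
    _ ≤ |F (p n) - G (p n)| := hn

/-- Lemma 5.1, strong negative theorem on `[0,1]`: for `k ∈ ℕ`,
`r ∈ ℕ₀` and any positive continuous `ε` on `(0,1]` with `ε(x) → 0` as `x → 0⁺`,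
there is `F ∈ C^r[0,1]` such that for every polynomial `P`,
`limsup_{x→0⁺} |F(x)−P(x)| / ω_k(F^(r), ε(x)·x^((r+1)/k); [0,1]) = ∞`. -/
theorem stmt5 (k : ℕ) (hk : 1 ≤ k) (r : ℕ) (ε : ℝ → ℝ)
    (hεpos : ∀ x ∈ Ioc (0:ℝ) 1, 0 < ε x)
    (hεcont : ContinuousOn ε (Ioc 0 1))
    (hεlim : Tendsto ε (nhdsWithin 0 (Ioi 0)) (nhds 0)) :
    ∃ F : ℝ → ℝ, ContDiffOn ℝ r F (Icc 0 1) ∧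
      ∀ P : Polynomial ℝ, ∀ M : ℝ, ∀ δ : ℝ, 0 < δ → ∃ x : ℝ,
        0 < x ∧ x ≤ 1 ∧ x < δ ∧
        M * wmod k (iteratedDerivWithin r F (Icc 0 1))
            (ε x * x ^ (((r : ℝ) + 1) / k)) 0 1 < |F x - P.eval x| := by
  obtain ⟨F, hF, p, hp, hgap⟩ := stmt5_general (Nat.one_le_iff_ne_zero.1 hk) r
    (tendsto_nhdsWithin_iff.2 ⟨hεlim, mem_of_superset (Ioc_mem_nhdsGT one_pos) hεpos⟩)
  refine ⟨F, hF.contDiffOn, fun P M δ hδ => ?_⟩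
  obtain ⟨n, hn, hpos, hle⟩ := ((hgap _ (AnalyticOnNhd.eval_polynomial P 0 (mem_univ 0)) M).and
    (hp.eventually (Ioo_mem_nhdsGT (lt_min one_pos hδ)))).exists
  exact ⟨p n, hpos, (hle.trans_le (min_le_left _ _)).le, hle.trans_le (min_le_right _ _), hn⟩
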